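/- Fix a natural number n ≥ 4 and define F(γ) = [4 + 2nγ/(1-γ)] / [1 + (1-γ)^{-2} + 2(1-γ)^{-(n-1)}]. Then F(γ) = 1 - ((n² - 3n + 3)/4)·γ² + O(γ³) as γ → 0⁺. -/

import Mathlib

/-!
Multiplying numerator and denominator by `(1 - γ) ^ (n - 1)` turns the fidelity into a quotient
`N / D` of polynomials in `γ` with `D = (1 - γ) ^ (n - 1) + (1 - γ) ^ (n - 3) + 2 ≥ 2`.
The second-order expansion of powers of `1 - γ` (`one_sub_pow_expansion`) gives
`N - (1 - (n² - 3n + 3) / 4 * γ²) * D = γ³ * G γ` with `G` continuous, and `G` is bounded on `[0, 1]`.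
-/

/-- Second-order binomial expansion of `(1 - γ) ^ k`, with a continuous cubic remainder factor. -/
lemma one_sub_pow_expansion (k : ℕ) : ∃ f : ℝ → ℝ, Continuous f ∧ ∀ γ : ℝ,
    (1 - γ) ^ k = 1 - k * γ + k * (k - 1) / 2 * γ ^ 2 + γ ^ 3 * f γ := by
  induction k with
  | zero => exact ⟨fun _ => 0, continuous_const, fun γ => by simp⟩
  | succ k ih =>
    obtain ⟨f, hf, h⟩ := ih
    refine ⟨fun γ => (1 - γ) * f γ - k * (k - 1) / 2, by fun_prop, fun γ => ?_⟩
    rw [pow_succ, h]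
    push_cast
    ring

/-- Worst-case fidelity of the ((n,k)) pair-complementary NSA AD code:
`F(γ) = [4 + 2nγ/(1-γ)] / [1 + (1-γ)^{-2} + 2(1-γ)^{-(n-1)}]
      = 1 - ((n²-3n+3)/4)γ² + O(γ³)` as `γ → 0⁺`. -/
theorem stmt_17 (n : ℕ) (hn : 4 ≤ n) :
    ∃ C : ℝ, 0 < C ∧ ∃ δ : ℝ, 0 < δ ∧ δ < 1 ∧
      ∀ γ : ℝ, 0 < γ → γ < δ →
        |(4 + 2 * (n : ℝ) * γ / (1 - γ))
            / (1 + (1 - γ) ^ (-2 : ℤ) + 2 * (1 - γ) ^ (-((n : ℤ) - 1)))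
          - (1 - ((n : ℝ) ^ 2 - 3 * (n : ℝ) + 3) / 4 * γ ^ 2)| ≤ C * γ ^ 3 := by
  obtain ⟨p, rfl⟩ : ∃ p, n = p + 4 := ⟨n - 4, by omega⟩
  obtain ⟨f₁, hf₁, h₁⟩ := one_sub_pow_expansion (p + 1)
  obtain ⟨f₂, hf₂, h₂⟩ := one_sub_pow_expansion (p + 2)
  obtain ⟨f₃, hf₃, h₃⟩ := one_sub_pow_expansion (p + 3)
  set c : ℝ := (((p + 4 : ℕ) : ℝ) ^ 2 - 3 * ((p + 4 : ℕ) : ℝ) + 3) / 4 with hc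
  -- The cofactor of `γ ^ 3` in `N - (1 - c * γ ^ 2) * D`.
  let G : ℝ → ℝ := fun γ =>
    4 * f₃ γ + 2 * (p + 4) * ((p + 2) * (p + 1) / 2 + γ * f₂ γ) - (f₃ γ + f₁ γ)
      + c * γ ^ 2 * (f₃ γ + f₁ γ)
      + c * (-(2 * p + 4) + ((p + 3) * (p + 2) + (p + 1) * p) / 2 * γ)
  have hG : Continuous G := by fun_prop
  obtain ⟨B, hB⟩ := (isCompact_Icc (a := (0 : ℝ)) (b := 1)).exists_bound_of_continuousOn
    hG.continuousOn
  refine ⟨|B| + 1, by positivity, 1 / 2, by norm_num, by norm_num, fun γ h0 hγ => ?_⟩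
  have hx : 0 < 1 - γ := by linarith
  have hD : 2 ≤ (1 - γ) ^ (p + 3) + (1 - γ) ^ (p + 1) + 2 := by
    have := pow_pos hx (p + 3)
    have := pow_pos hx (p + 1)
    linarith
  have key : 4 * (1 - γ) ^ (p + 3) + 2 * (p + 4) * γ * (1 - γ) ^ (p + 2)
      - (1 - c * γ ^ 2) * ((1 - γ) ^ (p + 3) + (1 - γ) ^ (p + 1) + 2) = γ ^ 3 * G γ := by
    rw [h₁, h₂, h₃]
    simp only [G, hc]
    push_cast
    ring
  have hF : (4 + 2 * ((p + 4 : ℕ) : ℝ) * γ / (1 - γ))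
      / (1 + (1 - γ) ^ (-2 : ℤ) + 2 * (1 - γ) ^ (-(((p + 4 : ℕ) : ℤ) - 1)))
      = (4 * (1 - γ) ^ (p + 3) + 2 * (p + 4) * γ * (1 - γ) ^ (p + 2))
        / ((1 - γ) ^ (p + 3) + (1 - γ) ^ (p + 1) + 2) := by
    have e1 : (1 - γ) ^ (-(((p + 4 : ℕ) : ℤ) - 1)) = ((1 - γ) ^ (p + 3))⁻¹ := by
      rw [zpow_neg, ← zpow_natCast]
      congr 2
      push_cast
      ring
    have e2 : (1 - γ) ^ (-2 : ℤ) = ((1 - γ) ^ 2)⁻¹ := by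
      rw [zpow_neg]
      norm_cast
    have hx' := hx.ne'
    rw [e1, e2, ← mul_div_mul_right _ _ (pow_ne_zero (p + 3) hx')]
    congr 1
    · push_cast
      field_simp
      ring
    · field_simp
      ring
  have hGB : |G γ| ≤ B := hB γ ⟨h0.le, by linarith⟩
  have hγ3 : 0 < γ ^ 3 := by positivity
  rw [hF, div_sub' (by linarith), mul_comm _ (1 - c * γ ^ 2), key, abs_div, abs_mul,
    abs_of_pos hγ3, abs_of_pos (by linarith : 0 < (1 - γ) ^ (p + 3) + (1 - γ) ^ (p + 1) + 2),
    div_le_iff₀ (by linarith)]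
  have hB' : |G γ| ≤ |B| + 1 := by linarith [le_abs_self B]
  calc γ ^ 3 * |G γ| ≤ (|B| + 1) * γ ^ 3 := by nlinarith
    _ ≤ _ := le_mul_of_one_le_right (by positivity) (by linarith)
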